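/- arXiv:2512.23403 — 2 statements merged into one kernel-verified Lean document; each statement's English description precedes it below -/
import Mathlib

section
/- Let A be a one-register alternating finite-memory automaton over an infinite alphabet Σ with distinguished letters Δ. There is a constant N_A (depending only on A) such that for every word σ ∈ L(A) with |σ| > N_A there exist a decomposition σ = τυφ and a Δ-permutation α of Σ such that |υφ| ≤ N_A, |υ| > 0, and for every k ≥ 1 the word τ υ α(υ) α²(υ) ⋯ α^k(υ) α^k(φ) belongs to L(A). -/
/-!
Relative to a word `v`, the type of a non-distinguished letter is the set of states from which `v`
is accepted when the register holds that letter. All letters foreign to `v` have the same type; the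
profile of `v` consists of this type and of the number of letters of `v` of each type. Profiles are
well-quasi-ordered by Dickson's lemma and grow at most linearly along the suffixes of a word, so by
compactness every long word has, among boundedly many suffixes, some `φ` and a longer `υφ` such that
the profile of `φ` lies below that of `υφ`.

The letters of `φ` can then be sent injectively to letters of `υφ` of the same type. This extends to
a permutation `β` that maps some set `T` containing all letters of the word into itself, and the
letters of `T` foreign to `φ` to letters foreign to `υφ`. With `α = β⁻¹`, every state that accepts
`φ` with register content in `T` accepts `α(υφ)` with the same register content. Since `β` maps `T`
into itself, this replacement of `φ` can be iterated below the prefix `τυ`, which pumps the word.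
-/

/-- A one-register alternating finite-memory automaton over the alphabet `Sigma`,
with states `S`. -/
structure AFMA (Sigma : Type) (S : Type) where
  s0 : S
  F : Set S
  Δ : Finset Sigma
  θ0 : Sigma
  θ0_notin : θ0 ∉ Δ
  μΔ : S → Sigma → Set (Set S)
  μeq : S → Set (Set S)
  μne : S → Set (Set S × Set S)

namespace AFMA

variable {Sigma S : Type}

open Classical

/-- The induced transition function `μ^c` on a configuration `c` and a letter `σ`:
a set of sets of configurations. -/
noncomputable def muC (A : AFMA Sigma S) (c : S × Sigma) (σ : Sigma) : Set (Set (S × Sigma)) :=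
  if σ ∈ A.Δ then {D | ∃ Q ∈ A.μΔ c.1 σ, D = Q ×ˢ ({c.2} : Set Sigma)}
  else if σ = c.2 then {D | ∃ Q ∈ A.μeq c.1, D = Q ×ˢ ({c.2} : Set Sigma)}
  else {D | ∃ p ∈ A.μne c.1, D = p.1 ×ˢ ({c.2} : Set Sigma) ∪ p.2 ×ˢ ({σ} : Set Sigma)}

/-- `SetStep A C σ C'` : `C' ∈ μ^c(C, σ)`, i.e. `C'` is a union, over all `c ∈ C`,
of chosen elements of `μ^c(c, σ)`. -/
def SetStep (A : AFMA Sigma S) (C : Set (S × Sigma)) (σ : Sigma)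
    (C' : Set (S × Sigma)) : Prop :=
  ∃ g : S × Sigma → Set (S × Sigma),
    (∀ c ∈ C, g c ∈ A.muC c σ) ∧ C' = ⋃ c ∈ C, g c

/-- `Steps A C w C'` : reading the word `w` from the configuration set `C`
the automaton can reach the configuration set `C'`. -/
inductive Steps (A : AFMA Sigma S) :
    Set (S × Sigma) → List Sigma → Set (S × Sigma) → Prop
  | nil (C) : Steps A C [] C
  | cons {C C' C'' σ w} : A.SetStep C σ C' → Steps A C' w C'' → Steps A C (σ :: w) C''

/-- A set of configurations is accepting if all its states are accepting. -/
def Accepting (A : AFMA Sigma S) (C : Set (S × Sigma)) : Prop :=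
  ∀ c ∈ C, c.1 ∈ A.F

/-- The language accepted by `A`. -/
def Lang (A : AFMA Sigma S) : Set (List Sigma) :=
  {w | ∃ C, A.Steps {(A.s0, A.θ0)} w C ∧ A.Accepting C}

/-- The action of a permutation of the alphabet on a set of configurations. -/
def mapConfigs (α : Equiv.Perm Sigma) (C : Set (S × Sigma)) : Set (S × Sigma) :=
  (fun c => (c.1, α c.2)) '' C

end AFMA

/-- A `Δ`-permutation of the alphabet: a bijection fixing every distinguished letter. -/
def IsDeltaPerm {Sigma : Type} (Δ : Finset Sigma) (α : Equiv.Perm Sigma) : Prop :=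
  ∀ δ ∈ Δ, α δ = δ

open Cardinal Set

section Combinatorics

/- The sequences controlled by `B` form a compact space, which the open sets `{q | r (q i) (q j)}`
with `i < j` cover. -/
theorem exists_bound_of_wellQuasiOrdered {Q : Type*} {r : Q → Q → Prop} (hr : WellQuasiOrdered r)
    {B : ℕ → Set Q} (hB : ∀ n, (B n).Finite) :
    ∃ N, ∀ q : ℕ → Q, (∀ n, q n ∈ B n) → ∃ i j, i < j ∧ j ≤ N ∧ r (q i) (q j) := by
  let : TopologicalSpace Q := ⊥
  have : DiscreteTopology Q := ⟨rfl⟩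
  let U : ℕ × ℕ → Set (ℕ → Q) := fun p => {q | p.1 < p.2 ∧ r (q p.1) (q p.2)}
  have isOpen_U (p : ℕ × ℕ) : IsOpen (U p) :=
    (isOpen_discrete {x : Q × Q | p.1 < p.2 ∧ r x.1 x.2}).preimage
      (by fun_prop : Continuous fun q : ℕ → Q => (q p.1, q p.2))
  have subset_iUnion_U : univ.pi B ⊆ ⋃ p, U p := fun q _ =>
    let ⟨i, j, hij⟩ := hr q
    mem_iUnion.2 ⟨(i, j), hij⟩
  obtain ⟨t, ht⟩ := (isCompact_univ_pi fun n => (hB n).isCompact).elim_finite_subcover U isOpen_U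
    subset_iUnion_U
  refine ⟨t.sup Prod.snd, fun q hq => ?_⟩
  obtain ⟨p, hpt, hlt, hrel⟩ := mem_iUnion₂.1 (ht (mem_univ_pi.2 hq))
  exact ⟨p.1, p.2, hlt, Finset.le_sup (f := Prod.snd) hpt, hrel⟩

theorem exists_injOn_of_ncard_fiber_le {α β κ : Type*} [Nonempty β] {s : Set α} {t : Set β}
    (hs : s.Finite) (ht : t.Finite) (p : α → κ) (q : β → κ)
    (h : ∀ x, {a ∈ s | p a = x}.ncard ≤ {b ∈ t | q b = x}.ncard) :
    ∃ f : α → β, InjOn f s ∧ ∀ a ∈ s, f a ∈ t ∧ q (f a) = p a := by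
  have exists_fiberwise (x : κ) : ∃ g : α → β,
      {a ∈ s | p a = x} ⊆ g ⁻¹' {b ∈ t | q b = x} ∧ InjOn g {a ∈ s | p a = x} := by
    have hsx : {a ∈ s | p a = x}.Finite := hs.subset (sep_subset _ _)
    have htx : {b ∈ t | q b = x}.Finite := ht.subset (sep_subset _ _)
    apply hsx.exists_injOn_of_encard_le
    rw [← hsx.cast_ncard_eq, ← htx.cast_ncard_eq]
    exact_mod_cast h x
  choose g hg hg_inj using exists_fiberwise
  have hf (a : α) (ha : a ∈ s) : g (p a) a ∈ t ∧ q (g (p a) a) = p a := hg (p a) ⟨ha, rfl⟩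
  refine ⟨fun a => g (p a) a, fun a ha b hb hab => ?_, hf⟩
  have hp : p a = p b := (hf a ha).2.symm.trans ((congrArg q hab).trans (hf b hb).2)
  exact hg_inj (p b) ⟨ha, hp⟩ ⟨hb, rfl⟩ (by simpa only [hp] using hab)

variable {α : Type*}

theorem exists_perm_eqOn {T : Set α} (hT : #(Tᶜ : Set α) = #α) {f : α → α} (hf : InjOn f T)
    (hfT : MapsTo f T T) : ∃ β : Equiv.Perm α, EqOn β f T := by
  have range_subset : range (T.domRestrict f) ⊆ T := by
    rw [range_domRestrict]
    exact hfT.image_subset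
  have mk_compl_range : #((range (T.domRestrict f))ᶜ : Set α) = #α :=
    (mk_set_le _).antisymm (hT ▸ mk_le_mk_of_subset (compl_subset_compl.2 range_subset))
  obtain ⟨β, hβ⟩ := extend_function ⟨T.domRestrict f, hf.injective⟩
    (Cardinal.eq.1 (hT.trans mk_compl_range.symm))
  exact ⟨β, fun x hx => hβ ⟨x, hx⟩⟩

theorem exists_disjoint_mk_eq_of_mk_lt [Infinite α] {R : Set α} (hR : #R < #α) :
    ∃ t : Set α, Disjoint t R ∧ #t = #α ∧ #((R ∪ t)ᶜ : Set α) = #α := by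
  have mk_compl_R : #(Rᶜ : Set α) = #α := mk_compl_of_infinite R hR
  have infinite_compl_R : (Rᶜ).Infinite :=
    infinite_coe_iff.1 (infinite_iff.2 (mk_compl_R ▸ aleph0_le_mk α))
  obtain ⟨t, u, htu, hdisj, hcard⟩ := infinite_compl_R.exists_union_disjoint_cardinal_eq_of_infinite
  have add_self_mk_t : #t + #t = #α := by
    nth_rw 2 [hcard]
    rw [← mk_union_of_disjoint hdisj, htu, mk_compl_R]
  have aleph0_le_mk_t : ℵ₀ ≤ #t := by
    by_contra! hlt
    exact (add_self_mk_t ▸ add_lt_aleph0 hlt hlt).not_ge (aleph0_le_mk α)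
  have mk_t : #t = #α := (add_eq_self aleph0_le_mk_t).symm.trans add_self_mk_t
  have compl_union_eq : (R ∪ t)ᶜ = u := by
    rw [compl_union, ← htu, ← sdiff_eq, union_sdiff_left, hdisj.symm.sdiff_eq_left]
  exact ⟨t, subset_compl_iff_disjoint_right.1 (htu ▸ subset_union_left), mk_t,
    by rw [compl_union_eq, ← hcard, mk_t]⟩

/- A Hilbert hotel: `T` adjoins to `R` enough room to send `T \ P` into `T \ R`. -/
theorem exists_perm_eqOn_mapsTo_superset [Infinite α] {P R : Set α} (hPR : P ⊆ R) (hR : #R < #α)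
    {f : α → α} (hf : InjOn f P) (hfR : MapsTo f P R) :
    ∃ (T : Set α) (β : Equiv.Perm α), R ⊆ T ∧ MapsTo β T T ∧ EqOn β f P ∧
      MapsTo β (T \ P) Rᶜ := by
  classical
  obtain ⟨t, htR, mk_t, mk_compl⟩ := exists_disjoint_mk_eq_of_mk_lt hR
  obtain ⟨j⟩ : Nonempty (α ↪ t) := mk_t.ge
  have j_notMem (x : α) : (j x : α) ∉ R := disjoint_left.1 htR (j x).2
  let g : α → α := P.piecewise f fun x => j x
  have g_of_mem {x : α} (hx : x ∈ P) : g x = f x := piecewise_eq_of_mem _ _ _ hx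
  have g_of_notMem {x : α} (hx : x ∉ P) : g x = j x := piecewise_eq_of_notMem _ _ _ hx
  have g_injective : g.Injective := (injective_piecewise_iff _).2
    ⟨hf, (Subtype.val_injective.comp j.injective).injOn,
      fun x hx y _ => ne_of_mem_of_not_mem (hfR hx) (j_notMem y)⟩
  have g_mapsTo : MapsTo g (R ∪ t) (R ∪ t) := by
    intro x _
    by_cases hx : x ∈ P
    · exact g_of_mem hx ▸ Or.inl (hfR hx)
    · exact g_of_notMem hx ▸ Or.inr (j x).2
  obtain ⟨β, hβ⟩ := exists_perm_eqOn mk_compl g_injective.injOn g_mapsTo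
  refine ⟨R ∪ t, β, subset_union_left, g_mapsTo.congr hβ.symm, fun x hx => ?_, fun x hx => ?_⟩
  · rw [hβ (Or.inl (hPR hx)), g_of_mem hx]
  · rw [hβ hx.1, g_of_notMem hx.2]
    exact j_notMem x

theorem iterate_map_append (π : Equiv.Perm α) (υ φ : List α) (k : ℕ) :
    (fun v => (υ ++ v).map π)^[k] φ =
      ((List.range k).flatMap fun i => υ.map ⇑(π ^ (i + 1))) ++ φ.map ⇑(π ^ k) := by
  induction k with
  | zero => simp
  | succ k ih =>
    rw [Function.iterate_succ_apply', ih, List.range_succ_eq_map]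
    simp [List.flatMap_map, List.map_flatMap, List.map_map, Function.comp_def, pow_succ']

end Combinatorics

namespace IsDeltaPerm

variable {Sigma : Type} {Δ : Finset Sigma} {α : Equiv.Perm Sigma}

theorem apply_mem_iff (hα : IsDeltaPerm Δ α) {x : Sigma} : α x ∈ Δ ↔ x ∈ Δ :=
  ⟨fun hx => α.injective (hα _ hx) ▸ hx, fun hx => (hα x hx).symm ▸ hx⟩

theorem inv (hα : IsDeltaPerm Δ α) : IsDeltaPerm Δ α⁻¹ := fun δ hδ =>
  Equiv.Perm.inv_eq_iff_eq.2 (hα δ hδ).symm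

end IsDeltaPerm

namespace AFMA

variable {Sigma S : Type} {A : AFMA Sigma S} {α : Equiv.Perm Sigma} {T : Set Sigma}
  {u v v' : List Sigma}

/-- The configurations from which `A` accepts a word. Since the branches of an alternating run do
not interact, acceptance from a set of configurations is acceptance from each of them. -/
def acceptingConfigs (A : AFMA Sigma S) : List Sigma → Set (S × Sigma)
  | [] => {c | c.1 ∈ A.F}
  | σ :: v => {c | ∃ D ∈ A.muC c σ, D ⊆ A.acceptingConfigs v}

theorem exists_steps_accepting_iff (w : List Sigma) (C : Set (S × Sigma)) :
    (∃ C', A.Steps C w C' ∧ A.Accepting C') ↔ C ⊆ A.acceptingConfigs w := by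
  induction w generalizing C with
  | nil =>
    constructor
    · rintro ⟨_, ⟨⟩, hC⟩
      exact hC
    · exact fun hC => ⟨C, .nil C, hC⟩
  | cons σ v ih =>
    constructor
    · rintro ⟨C'', _ | ⟨⟨g, hg, rfl⟩, hsteps⟩, hacc⟩ c hc
      exact ⟨g c, hg c hc, (subset_biUnion_of_mem hc).trans ((ih _).1 ⟨C'', hsteps, hacc⟩)⟩
    · intro hC
      have exists_accepting_move (c : S × Sigma) (hc : c ∈ C) :
          ∃ D ∈ A.muC c σ, D ⊆ A.acceptingConfigs v := hC hc
      choose! g hg hgv using exists_accepting_move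
      obtain ⟨C', hsteps, hacc⟩ := (ih (⋃ c ∈ C, g c)).2 (iUnion₂_subset hgv)
      exact ⟨C', .cons ⟨g, hg, rfl⟩ hsteps, hacc⟩

/-- The type of the letter `θ` relative to the word `v`: the states from which `A` accepts `v` when
its register contains `θ`. -/
def acceptingStates (A : AFMA Sigma S) (v : List Sigma) (θ : Sigma) : Set S :=
  {s | (s, θ) ∈ A.acceptingConfigs v}

theorem mem_Lang_iff {w : List Sigma} : w ∈ A.Lang ↔ A.s0 ∈ A.acceptingStates w A.θ0 :=
  (exists_steps_accepting_iff w _).trans singleton_subset_iff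

theorem snd_of_mem_muC {c d : S × Sigma} {σ : Sigma} {D : Set (S × Sigma)} (hD : D ∈ A.muC c σ)
    (hd : d ∈ D) : d.2 = c.2 ∨ d.2 = σ ∧ σ ∉ A.Δ := by
  unfold muC at hD
  split_ifs at hD with hσ _
  · obtain ⟨Q, -, rfl⟩ := hD
    exact .inl hd.2
  · obtain ⟨Q, -, rfl⟩ := hD
    exact .inl hd.2
  · obtain ⟨Q, -, rfl⟩ := hD
    exact hd.imp And.right fun h => ⟨h.2, hσ⟩

theorem mapConfigs_prod_singleton (Q : Set S) (θ : Sigma) :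
    mapConfigs α (Q ×ˢ {θ}) = Q ×ˢ {α θ} := by
  ext ⟨s, x⟩
  simp [mapConfigs, eq_comm]

theorem mapConfigs_mem_muC (hα : IsDeltaPerm A.Δ α) {c : S × Sigma} {σ : Sigma}
    {D : Set (S × Sigma)} (hD : D ∈ A.muC c σ) : mapConfigs α D ∈ A.muC (c.1, α c.2) (α σ) := by
  unfold muC at hD ⊢
  split_ifs at hD with hσ hσc
  · rw [if_pos (hα.apply_mem_iff.2 hσ)]
    obtain ⟨Q, hQ, rfl⟩ := hD
    exact ⟨Q, (hα σ hσ).symm ▸ hQ, mapConfigs_prod_singleton Q _⟩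
  · rw [if_neg (mt hα.apply_mem_iff.1 hσ), if_pos (congrArg α hσc)]
    obtain ⟨Q, hQ, rfl⟩ := hD
    exact ⟨Q, hQ, mapConfigs_prod_singleton Q _⟩
  · rw [if_neg (mt hα.apply_mem_iff.1 hσ), if_neg (α.injective.ne hσc)]
    obtain ⟨p, hp, rfl⟩ := hD
    refine ⟨p, hp, (image_union _ _ _).trans ?_⟩
    exact congrArg₂ _ (mapConfigs_prod_singleton _ _) (mapConfigs_prod_singleton _ _)

theorem mapConfigs_acceptingConfigs_subset (hα : IsDeltaPerm A.Δ α) (v : List Sigma) :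
    mapConfigs α (A.acceptingConfigs v) ⊆ A.acceptingConfigs (v.map α) := by
  induction v with
  | nil => exact image_subset_iff.2 fun _ hc => hc
  | cons σ v ih =>
    rintro _ ⟨c, ⟨D, hD, hDv⟩, rfl⟩
    exact ⟨mapConfigs α D, mapConfigs_mem_muC hα hD, (image_mono hDv).trans ih⟩

theorem acceptingStates_map (hα : IsDeltaPerm A.Δ α) (v : List Sigma) (θ : Sigma) :
    A.acceptingStates (v.map α) (α θ) = A.acceptingStates v θ := by
  have subset_map {π : Equiv.Perm Sigma} (hπ : IsDeltaPerm A.Δ π) (v : List Sigma) (θ : Sigma) :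
      A.acceptingStates v θ ⊆ A.acceptingStates (v.map π) (π θ) := fun s hs =>
    mapConfigs_acceptingConfigs_subset hπ v ⟨(s, θ), hs, rfl⟩
  refine Subset.antisymm ?_ (subset_map hα v θ)
  simpa [Function.comp_def] using subset_map hα.inv (v.map α) (α θ)

theorem acceptingStates_eq_of_notMem {x y : Sigma} (hxv : x ∉ v) (hyv : y ∉ v) (hxΔ : x ∉ A.Δ)
    (hyΔ : y ∉ A.Δ) : A.acceptingStates v x = A.acceptingStates v y := by
  classical
  have swap_apply {z : Sigma} (hx : z ≠ x) (hy : z ≠ y) : Equiv.swap x y z = z :=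
    Equiv.swap_apply_of_ne_of_ne hx hy
  have isDeltaPerm_swap : IsDeltaPerm A.Δ (Equiv.swap x y) := fun δ hδ =>
    swap_apply (ne_of_mem_of_not_mem hδ hxΔ) (ne_of_mem_of_not_mem hδ hyΔ)
  have map_swap : v.map (Equiv.swap x y) = v :=
    (List.map_congr_left fun z hz =>
      swap_apply (ne_of_mem_of_not_mem hz hxv) (ne_of_mem_of_not_mem hz hyv)).trans v.map_id
  simpa only [map_swap, Equiv.swap_apply_left] using (acceptingStates_map isDeltaPerm_swap v x).symm

/-- The letters of a word that are not distinguished; only these can enter the register. -/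
def ordinaryLetters (A : AFMA Sigma S) (v : List Sigma) : Set Sigma :=
  {θ | θ ∈ v ∧ θ ∉ A.Δ}

theorem finite_ordinaryLetters (A : AFMA Sigma S) (v : List Sigma) : (A.ordinaryLetters v).Finite :=
  v.finite_toSet.subset fun _ => And.left

/-- The profile of a word `v`: the states from which `A` accepts `v` when its register contains a
letter not occurring in `v` (all such letters have the same type), and the number of ordinary
letters of `v` of each type. -/
noncomputable def profile (A : AFMA Sigma S) (v : List Sigma) : Set S × (Set S → ℕ) :=
  (⋃ θ ∈ {θ | θ ∉ v ∧ θ ∉ A.Δ}, A.acceptingStates v θ,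
    fun X => {θ ∈ A.ordinaryLetters v | A.acceptingStates v θ = X}.ncard)

theorem profile_snd_le_length (A : AFMA Sigma S) (v : List Sigma) (X : Set S) :
    (A.profile v).2 X ≤ v.length := by
  classical
  calc (A.profile v).2 X
      ≤ (v.toFinset : Set Sigma).ncard :=
        ncard_le_ncard (fun θ hθ => List.mem_toFinset.2 hθ.1.1) v.toFinset.finite_toSet
    _ = v.toFinset.card := ncard_coe_finset _
    _ ≤ v.length := v.toFinset_card_le

theorem exists_decomposition_profile_le [Finite S] (A : AFMA Sigma S) :
    ∃ N : ℕ, ∀ w : List Sigma, N < w.length → ∃ τ υ φ : List Sigma,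
      w = τ ++ υ ++ φ ∧ (υ ++ φ).length ≤ N ∧ 0 < υ.length ∧ A.profile φ ≤ A.profile (υ ++ φ) := by
  have : WellQuasiOrderedLE (Set S) := Finite.to_wellQuasiOrderedLE
  let B (n : ℕ) : Set (Set S × (Set S → ℕ)) := {q | ∀ X, q.2 X ≤ n}
  have finite_B (n : ℕ) : (B n).Finite := (finite_univ.prod (.pi' fun _ => finite_Iic n)).subset
    fun q hq => ⟨mem_univ q.1, hq⟩
  obtain ⟨N, hN⟩ := exists_bound_of_wellQuasiOrdered wellQuasiOrdered_le finite_B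
  refine ⟨N, fun w hw => ?_⟩
  have mem_B (n : ℕ) : A.profile (w.drop (w.length - n)) ∈ B n := fun X =>
    (A.profile_snd_le_length _ X).trans (by rw [List.length_drop]; lia)
  obtain ⟨i, j, hij, hjN, hle⟩ := hN _ mem_B
  obtain ⟨υ, hυ⟩ := w.drop_suffix_drop_left (show w.length - j ≤ w.length - i by lia)
  have length_υ : υ.length + i = j := by
    have := congrArg List.length hυ
    simp only [List.length_append, List.length_drop] at this
    lia
  refine ⟨w.take (w.length - j), υ, w.drop (w.length - i), ?_, ?_, by lia, hυ ▸ hle⟩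
  · rw [List.append_assoc, hυ, List.take_append_drop]
  · rw [hυ, List.length_drop]
    lia

/-- Domination of the word `v` by the word `v'`: with any register content in `T`, every state that
accepts `v` accepts `v'`. -/
def DominatedOn (A : AFMA Sigma S) (T : Set Sigma) (v v' : List Sigma) : Prop :=
  ∀ θ ∈ T, θ ∉ A.Δ → A.acceptingStates v θ ⊆ A.acceptingStates v' θ

theorem DominatedOn.append_left (h : A.DominatedOn T v v') (hu : ∀ x ∈ u, x ∈ T) :
    A.DominatedOn T (u ++ v) (u ++ v') := by
  induction u with
  | nil => exact h
  | cons σ u ih =>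
    rintro θ hθT hθΔ s ⟨D, hD, hDuv⟩
    refine ⟨D, hD, fun d hd => ?_⟩
    have hd_snd : d.2 ∈ T ∧ d.2 ∉ A.Δ := by
      rcases snd_of_mem_muC hD hd with hdθ | ⟨hdσ, hσ⟩
      · exact hdθ ▸ ⟨hθT, hθΔ⟩
      · exact hdσ ▸ ⟨hu σ List.mem_cons_self, hσ⟩
    exact ih (fun x hx => hu x (List.mem_cons_of_mem σ hx)) d.2 hd_snd.1 hd_snd.2 (hDuv hd)

theorem DominatedOn.map (h : A.DominatedOn T v v') (hα : IsDeltaPerm A.Δ α)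
    (hT : MapsTo ⇑α⁻¹ T T) : A.DominatedOn T (v.map α) (v'.map α) := by
  intro θ hθT hθΔ
  have hsubset := h (α⁻¹ θ) (hT hθT) (mt hα.inv.apply_mem_iff.1 hθΔ)
  rwa [← acceptingStates_map hα v, ← acceptingStates_map hα v',
    show α (α⁻¹ θ) = θ from α.apply_symm_apply θ] at hsubset

theorem DominatedOn.iterate_map_append {υ φ : List Sigma}
    (h : A.DominatedOn T φ ((υ ++ φ).map α)) (hα : IsDeltaPerm A.Δ α) (hT : MapsTo ⇑α⁻¹ T T)
    (hυ : ∀ x ∈ υ, x ∈ T) (k : ℕ) :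
    A.DominatedOn T φ ((fun v => (υ ++ v).map α)^[k] φ) := by
  induction k with
  | zero => exact fun _ _ _ => Subset.rfl
  | succ k ih =>
    rw [Function.iterate_succ_apply']
    exact fun θ hθT hθΔ =>
      (h θ hθT hθΔ).trans ((ih.append_left hυ).map hα hT θ hθT hθΔ)

theorem exists_injOn_acceptingStates_eq (h : A.profile v ≤ A.profile u) :
    ∃ f : Sigma → Sigma, InjOn f (↑A.Δ ∪ A.ordinaryLetters v) ∧ EqOn f id A.Δ ∧
      ∀ θ ∈ A.ordinaryLetters v,
        f θ ∈ A.ordinaryLetters u ∧ A.acceptingStates u (f θ) = A.acceptingStates v θ := by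
  classical
  have : Nonempty Sigma := ⟨A.θ0⟩
  obtain ⟨g, g_inj, hg⟩ := exists_injOn_of_ncard_fiber_le (A.finite_ordinaryLetters v)
    (A.finite_ordinaryLetters u) (A.acceptingStates v) (A.acceptingStates u) h.2
  let f : Sigma → Sigma := (A.Δ : Set Sigma).piecewise id g
  have hfΔ : EqOn f id A.Δ := piecewise_eqOn ..
  have hfg : EqOn f g (A.ordinaryLetters v) := fun θ hθ => piecewise_eq_of_notMem _ _ _ hθ.2
  have disjoint_Δ : Disjoint (A.Δ : Set Sigma) (A.ordinaryLetters v) :=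
    disjoint_left.2 fun θ hθ hθv => hθv.2 hθ
  refine ⟨f, (injOn_union disjoint_Δ).2 ⟨?_, ?_, fun x hx y hy => ?_⟩, hfΔ, fun θ hθ => ?_⟩
  · exact (injOn_id _).congr hfΔ.symm
  · exact g_inj.congr hfg.symm
  · rw [hfΔ hx, hfg hy]
    exact ne_of_mem_of_not_mem hx (hg y hy).1.2
  · rw [hfg hθ]
    exact hg θ hθ

theorem exists_isDeltaPerm_dominatedOn [Infinite Sigma] (h : A.profile v ≤ A.profile u)
    {R : Set Sigma} (hR : R.Finite) (hΔ : ↑A.Δ ⊆ R) (hv : ∀ x ∈ v, x ∈ R) (hu : ∀ x ∈ u, x ∈ R) :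
    ∃ (T : Set Sigma) (α : Equiv.Perm Sigma), R ⊆ T ∧ MapsTo ⇑α⁻¹ T T ∧ IsDeltaPerm A.Δ α ∧
      A.DominatedOn T v (u.map α) := by
  obtain ⟨f, f_inj, hfΔ, hf⟩ := exists_injOn_acceptingStates_eq h
  have hPR : ↑A.Δ ∪ A.ordinaryLetters v ⊆ R := union_subset hΔ fun θ hθ => hv θ hθ.1
  have hfR : MapsTo f (↑A.Δ ∪ A.ordinaryLetters v) R := by
    rintro θ (hθ | hθ)
    · exact (hfΔ hθ).symm ▸ hΔ hθ
    · exact hu _ (hf θ hθ).1.1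
  obtain ⟨T, β, hRT, hβT, hβf, hβR⟩ := exists_perm_eqOn_mapsTo_superset hPR
    (hR.lt_aleph0.trans_le (aleph0_le_mk Sigma)) f_inj hfR
  have hβ : IsDeltaPerm A.Δ β := fun δ hδ => (hβf (.inl hδ)).trans (hfΔ hδ)
  refine ⟨T, β⁻¹, hRT, by rwa [inv_inv], hβ.inv, fun θ hθT hθΔ => ?_⟩
  have acceptingStates_u : A.acceptingStates (u.map ⇑β⁻¹) θ = A.acceptingStates u (β θ) := by
    rw [← acceptingStates_map hβ.inv u, show β⁻¹ (β θ) = θ from β.symm_apply_apply θ]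
  rw [acceptingStates_u]
  by_cases hθv : θ ∈ v
  · rw [hβf (.inr ⟨hθv, hθΔ⟩), (hf θ ⟨hθv, hθΔ⟩).2]
  · have hβθ : β θ ∉ R := hβR ⟨hθT, fun hθ => hθ.elim hθΔ fun hθ => hθv hθ.1⟩
    intro s hs
    obtain ⟨x, ⟨hxu, hxΔ⟩, hsx⟩ := mem_iUnion₂.1 (h.1 (mem_biUnion ⟨hθv, hθΔ⟩ hs))
    rwa [acceptingStates_eq_of_notMem (mt (hu _) hβθ) hxu (mt (hΔ ·) hβθ) hxΔ]

end AFMA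

/-- Pumping lemma for one-register alternating finite-memory automata: there is
a constant `N` such that every accepted word longer than `N` decomposes as
`τυφ` with `|υφ| ≤ N`, `|υ| > 0`, and a `Δ`-permutation `α` such that
`τ υ α(υ) α²(υ) ⋯ α^k(υ) α^k(φ)` is accepted for every `k ≥ 1`. -/
theorem afma_pumping {Sigma S : Type} [Infinite Sigma] [Fintype S]
    (A : AFMA Sigma S) :
    ∃ N : ℕ, ∀ w ∈ A.Lang, N < w.length →
      ∃ (τ υ φ : List Sigma) (α : Equiv.Perm Sigma),
        w = τ ++ υ ++ φ ∧ IsDeltaPerm A.Δ α ∧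
        (υ ++ φ).length ≤ N ∧ 0 < υ.length ∧
        ∀ k : ℕ, 1 ≤ k →
          τ ++ υ ++ ((List.range k).flatMap fun i => υ.map ⇑(α ^ (i + 1))) ++
            φ.map ⇑(α ^ k) ∈ A.Lang := by
  obtain ⟨N, hN⟩ := A.exists_decomposition_profile_le
  refine ⟨N, fun w hw hNw => ?_⟩
  obtain ⟨τ, υ, φ, rfl, hlen, hυ, hprofile⟩ := hN w hNw
  let R : Set Sigma := ↑A.Δ ∪ ({x | x ∈ τ ++ υ ++ φ} ∪ {A.θ0})
  have hR : R.Finite :=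
    A.Δ.finite_toSet.union ((List.finite_toSet _).union (finite_singleton _))
  have mem_R {x : Sigma} (hx : x ∈ τ ++ υ ++ φ) : x ∈ R := .inr (.inl hx)
  obtain ⟨T, α, hRT, hαT, hα, hdom⟩ := AFMA.exists_isDeltaPerm_dominatedOn hprofile hR
    (fun x hx => .inl hx) (fun x hx => mem_R (List.mem_append_right _ hx))
    (fun x hx => mem_R (List.append_assoc τ υ φ ▸ List.mem_append_right τ hx))
  refine ⟨τ, υ, φ, α, rfl, hα, hlen, hυ, fun k _ => ?_⟩
  have hT : ∀ x ∈ τ ++ υ, x ∈ T := fun x hx => hRT (mem_R (List.mem_append_left φ hx))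
  have hpump : A.DominatedOn T φ ((fun v => (υ ++ v).map α)^[k] φ) :=
    hdom.iterate_map_append hα hαT (fun x hx => hT x (List.mem_append_right τ hx)) k
  rw [List.append_assoc, ← iterate_map_append, AFMA.mem_Lang_iff]
  exact hpump.append_left hT A.θ0 (hRT (.inr (.inr rfl))) A.θ0_notin (AFMA.mem_Lang_iff.1 hw)
end

section
/- Let A be a one-register alternating finite-memory automaton over an infinite alphabet Σ with distinguished letters Δ and accepting states F. Let σ = τυφ with |υ| > 0, and let C_0, C_{|τ|}, C_{|τυ|}, C_{|τυφ|} be finite sets of configurations with C_0 →τ C_{|τ|} →υ C_{|τυ|} →φ C_{|τυφ|}. Let α be a Δ-permutation of Σ and Σ′ ⊆ Σ be such that C_{|τυ|}, α(Σ′) ⪯_α C_{|τ|}, Σ′; α(Σ′) ⊆ Σ′; and [υφ] ⊆ Σ′. Then for every k ≥ 1 there exist finite sets of configurations D_1, …, D_k, E_k such that C_{|τυ|} →α(υ) D_1 →α²(υ) D_2 → ⋯ →α^k(υ) D_k →α^k(φ) E_k, and moreover if C_{|τυφ|} ⊆ F × Σ then also E_k ⊆ F × Σ. In particular, if σ = τυφ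 ∈ L(A) via an accepting run whose configuration sets after reading the prefixes of lengths 0, |τ|, |τυ|, |τυφ| satisfy the above hypotheses, then τ υ α(υ) ⋯ α^k(υ) α^k(φ) ∈ L(A) for every k ≥ 1. -/
namespace AFMA

variable {Sigma S : Type}

/-- `Σ(C)` : the set of (non-distinguished) letters occurring in configurations of `C`. -/
def lettersOf (Δ : Finset Sigma) (C : Set (S × Sigma)) : Set Sigma :=
  {σ | σ ∉ Δ ∧ ∃ s, (s, σ) ∈ C}

/-- `S^σ(C)` : the states paired with the letter `σ` in `C`. -/
def statesAt (C : Set (S × Sigma)) (σ : Sigma) : Set S :=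
  {s | (s, σ) ∈ C}

/-- `S^{Γ}(C)` : the states paired with some letter of `Γ` in `C`. -/
def statesOn (C : Set (S × Sigma)) (Γ : Set Sigma) : Set S :=
  ⋃ σ ∈ Γ, statesAt C σ

/-- `Σ^Q(C)` : the letters `σ` with `S^σ(C) = Q`. -/
def lettersWith (C : Set (S × Sigma)) (Q : Set S) : Set Sigma :=
  {σ | statesAt C σ = Q}

/-- The relation `C1,Γ1 ⪯_α C2,Γ2`. -/
def Preceq (Δ : Finset Sigma) (α : Equiv.Perm Sigma)
    (C1 : Set (S × Sigma)) (Γ1 : Set Sigma)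
    (C2 : Set (S × Sigma)) (Γ2 : Set Sigma) : Prop :=
  Γ1 ⊆ ⇑α '' Γ2 ∧
  (⇑α '' Γ2) ∩ lettersOf Δ C1 ⊆ Γ1 ∧
  (∀ σ ∈ Γ1, statesAt C1 σ ⊆ statesAt C2 (α⁻¹ σ)) ∧
  statesOn C1 Γ1ᶜ ⊆ statesOn C2 Γ2ᶜ

end AFMA

/-- The `k`-fold pumping `τ υ α(υ) α²(υ) ⋯ α^k(υ) α^k(φ)` of the decomposition
`τ ++ υ ++ φ` by the permutation `α`. -/
def pumpedWord {Sigma : Type} (α : Equiv.Perm Sigma) (τ υ φ : List Sigma) (k : ℕ) :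
    List Sigma :=
  τ ++ υ ++ ((List.range k).flatMap fun i => υ.map ⇑(α ^ (i + 1))) ++ φ.map ⇑(α ^ k)

/-!
A transition of an automaton on a letter depends only on the state, on whether the letter equals
the register, and on `Δ`. So two configurations with the same state whose registers pass the same
comparisons against `Γ`, up to the `Δ`-permutation `α`, have matching transitions on `σ ∈ Γ` and
`α σ`. The relation `D, α(Γ) ⪯_α C, Γ` says precisely that each configuration of `D` has such a
counterpart in `C`. Hence a run from `C` on a word `w` over `Γ` can be imitated by a run from `D` on
`α(w)`, and the relation persists along both runs. Imitating from `C_{|τυ|}` the run on `υφ` from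
`C_{|τ|}` gives a run on `α(υ)α(φ)`, and after its first part we are in the initial situation again
with `α(υ)`, `α(φ)` in place of `υ`, `φ`; this can be repeated because `α(Γ) ⊆ Γ`.
-/

theorem IsDeltaPerm.apply_mem_iff_s8 {Sigma : Type} {Δ : Finset Sigma} {α : Equiv.Perm Sigma}
    (hα : IsDeltaPerm Δ α) {σ : Sigma} : α σ ∈ Δ ↔ σ ∈ Δ := by
  refine ⟨fun h => ?_, fun h => (hα σ h).symm ▸ h⟩
  rwa [α.injective (hα _ h)] at h

namespace AFMA

variable {Sigma S : Type} {A : AFMA Sigma S} {α : Equiv.Perm Sigma} {Γ : Set Sigma}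

/-- The register contents `η` and `θ` are indistinguishable by letters of `Γ` up to `α`: comparing
`η` with `σ ∈ Γ` has the same outcome as comparing `θ` with `α σ`. Equivalently, either `η ∈ Γ` and
`θ = α η`, or `η ∉ Γ` and `θ ∉ α(Γ)`. -/
def Indist (α : Equiv.Perm Sigma) (Γ : Set Sigma) (η θ : Sigma) : Prop :=
  ∀ σ ∈ Γ, α σ = θ ↔ σ = η

theorem indist_apply (η : Sigma) : Indist α Γ η (α η) :=
  fun _ _ => α.apply_eq_iff_eq

theorem indist_of_notMem {η θ : Sigma} (hη : η ∉ Γ) (hθ : θ ∉ α '' Γ) : Indist α Γ η θ :=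
  fun σ hσ => iff_of_false (fun h => hθ ⟨σ, hσ, h⟩) (fun h => hη (h ▸ hσ))

/-- `C` covers `D` if each configuration of `D` has a counterpart in `C` with the same state and an
indistinguishable register. This is the relation `D, α(Γ) ⪯_α C, Γ` (see `preceq_image_iff_covers`)
in the pointwise form in which it is propagated along runs. -/
def Covers (α : Equiv.Perm Sigma) (Γ : Set Sigma) (C D : Set (S × Sigma)) : Prop :=
  ∀ s θ, (s, θ) ∈ D → ∃ η, Indist α Γ η θ ∧ (s, η) ∈ C

theorem preceq_image_iff_covers {Δ : Finset Sigma} {C D : Set (S × Sigma)} :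
    Preceq Δ α D (α '' Γ) C Γ ↔ Covers α Γ C D := by
  constructor
  · rintro ⟨-, -, hin, hout⟩ s θ hd
    by_cases hθ : θ ∈ α '' Γ
    · refine ⟨α⁻¹ θ, ?_, hin θ hθ hd⟩
      simpa using indist_apply (α := α) (Γ := Γ) (α⁻¹ θ)
    · obtain ⟨η, hη, hc⟩ := Set.mem_iUnion₂.1 (hout (Set.mem_biUnion hθ hd))
      exact ⟨η, indist_of_notMem hη hθ, hc⟩
  · refine fun h => ⟨subset_rfl, Set.inter_subset_left, ?_, fun s hs => ?_⟩
    · rintro _ ⟨σ, hσ, rfl⟩ s hd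
      obtain ⟨η, hη, hc⟩ := h s _ hd
      obtain rfl : σ = η := (hη σ hσ).1 rfl
      simpa [statesAt] using hc
    · obtain ⟨θ, hθ, hd⟩ := Set.mem_iUnion₂.1 hs
      obtain ⟨η, hη, hc⟩ := h s θ hd
      exact Set.mem_biUnion (fun hηΓ => hθ ⟨η, hηΓ, (hη η hηΓ).2 rfl⟩) hc

namespace Covers

variable {C C' D D' : Set (S × Sigma)}

theorem mono_left (h : Covers α Γ C D) (hC : C ⊆ C') : Covers α Γ C' D := fun s θ hd =>
  let ⟨η, hη, hc⟩ := h s θ hd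
  ⟨η, hη, hC hc⟩

theorem union (h : Covers α Γ C D) (h' : Covers α Γ C' D') : Covers α Γ (C ∪ C') (D ∪ D') := by
  rintro s θ (hd | hd)
  · exact h.mono_left Set.subset_union_left s θ hd
  · exact h'.mono_left Set.subset_union_right s θ hd

theorem accepting (h : Covers α Γ C D) (hC : A.Accepting C) : A.Accepting D := by
  rintro ⟨s, θ⟩ hd
  obtain ⟨η, -, hc⟩ := h s θ hd
  exact hC (s, η) hc

end Covers

theorem Indist.covers_prod {η θ : Sigma} (h : Indist α Γ η θ) (Q : Set S) :
    Covers α Γ (Q ×ˢ {η}) (Q ×ˢ {θ}) := by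
  rintro s _ ⟨hs, rfl⟩
  exact ⟨η, h, hs, rfl⟩

theorem Indist.exists_mem_muC {η θ σ : Sigma} (h : Indist α Γ η θ) (hα : IsDeltaPerm A.Δ α)
    (hσ : σ ∈ Γ) {s : S} {X : Set (S × Sigma)} (hX : X ∈ A.muC (s, η) σ) :
    ∃ Y ∈ A.muC (s, θ) (α σ), Covers α Γ X Y := by
  classical
  rw [muC, if_congr hα.apply_mem_iff_s8 rfl (if_congr (h σ hσ) rfl rfl)]
  rw [muC] at hX
  split_ifs at hX ⊢ with hΔ
  · obtain ⟨Q, hQ, rfl⟩ := hX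
    exact ⟨_, ⟨Q, (hα σ hΔ).symm ▸ hQ, rfl⟩, h.covers_prod Q⟩
  · obtain ⟨Q, hQ, rfl⟩ := hX
    exact ⟨_, ⟨Q, hQ, rfl⟩, h.covers_prod Q⟩
  · obtain ⟨P, hP, rfl⟩ := hX
    exact ⟨_, ⟨P, hP, rfl⟩, (h.covers_prod P.1).union ((indist_apply σ).covers_prod P.2)⟩

theorem Covers.exists_setStep {C C' D : Set (S × Sigma)} {σ : Sigma} (h : Covers α Γ C D)
    (hα : IsDeltaPerm A.Δ α) (hσ : σ ∈ Γ) (hC : A.SetStep C σ C') :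
    ∃ D', A.SetStep D (α σ) D' ∧ Covers α Γ C' D' := by
  obtain ⟨g, hg, rfl⟩ := hC
  have successor : ∀ d ∈ D, ∃ Y ∈ A.muC d (α σ), Covers α Γ (⋃ c ∈ C, g c) Y := by
    rintro ⟨s, θ⟩ hd
    obtain ⟨η, hη, hc⟩ := h s θ hd
    obtain ⟨Y, hY, hcov⟩ := hη.exists_mem_muC hα hσ (hg _ hc)
    exact ⟨Y, hY, hcov.mono_left (Set.subset_biUnion_of_mem hc)⟩
  choose! f hf hcov using successor
  refine ⟨⋃ d ∈ D, f d, ⟨f, hf, rfl⟩, fun s θ hx => ?_⟩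
  obtain ⟨d, hd, hx⟩ := Set.mem_iUnion₂.1 hx
  exact hcov d hd s θ hx

theorem Covers.exists_steps {C C' D : Set (S × Sigma)} {w : List Sigma} (h : Covers α Γ C D)
    (hα : IsDeltaPerm A.Δ α) (hw : ∀ x ∈ w, x ∈ Γ) (hC : A.Steps C w C') :
    ∃ D', A.Steps D (w.map α) D' ∧ Covers α Γ C' D' := by
  induction hC generalizing D with
  | nil C => exact ⟨D, .nil D, h⟩
  | cons hstep _ ih =>
    obtain ⟨hσ, hw⟩ := List.forall_mem_cons.1 hw
    obtain ⟨D₁, hD₁, hcov₁⟩ := h.exists_setStep hα hσ hstep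
    obtain ⟨D₂, hD₂, hcov₂⟩ := ih hcov₁ hw
    exact ⟨D₂, .cons hD₁ hD₂, hcov₂⟩

theorem Steps.append {C C' C'' : Set (S × Sigma)} {v w : List Sigma} (hv : A.Steps C v C')
    (hw : A.Steps C' w C'') : A.Steps C (v ++ w) C'' := by
  induction hv with
  | nil => exact hw
  | cons hstep _ ih => exact .cons hstep (ih hw)

theorem steps_flatMap_range {D : ℕ → Set (S × Sigma)} {w : ℕ → List Sigma} {k : ℕ}
    (h : ∀ i < k, A.Steps (D i) (w i) (D (i + 1))) :
    A.Steps (D 0) ((List.range k).flatMap w) (D k) := by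
  induction k with
  | zero => exact .nil _
  | succ k ih =>
    rw [List.range_succ, List.flatMap_append, List.flatMap_singleton]
    exact (ih fun i hi => h i (hi.trans k.lt_succ_self)).append (h k k.lt_succ_self)

theorem Covers.exists_chain {C₁ C₂ C₃ : Set (S × Sigma)} {υ φ : List Sigma}
    (h : Covers α Γ C₁ C₂) (hα : IsDeltaPerm A.Δ α) (hΓ : Set.MapsTo α Γ Γ)
    (hυΓ : ∀ x ∈ υ, x ∈ Γ) (hφΓ : ∀ x ∈ φ, x ∈ Γ)
    (hυ : A.Steps C₁ υ C₂) (hφ : A.Steps C₂ φ C₃) (k : ℕ) :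
    ∃ D : ℕ → Set (S × Sigma), D 0 = C₂ ∧
      (∀ i < k, A.Steps (D i) (υ.map ⇑(α ^ (i + 1))) (D (i + 1))) ∧
      ∃ E, A.Steps (D k) (φ.map ⇑(α ^ k)) E ∧ (A.Accepting C₃ → A.Accepting E) := by
  induction k generalizing C₁ C₂ C₃ υ φ with
  | zero => exact ⟨fun _ => C₂, rfl, by simp, C₃, by simpa using hφ, id⟩
  | succ k ih =>
    obtain ⟨D₁, hυ', h'⟩ := h.exists_steps hα hυΓ hυ
    obtain ⟨E₁, hφ', hcov⟩ := h'.exists_steps hα hφΓ hφ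
    have map_mem {w : List Sigma} (hw : ∀ x ∈ w, x ∈ Γ) : ∀ x ∈ w.map α, x ∈ Γ :=
      List.forall_mem_map.2 fun x hx => hΓ (hw x hx)
    have map_map_pow (w : List Sigma) (n : ℕ) :
        (w.map α).map ⇑(α ^ n) = w.map ⇑(α ^ (n + 1)) := by
      rw [List.map_map, pow_succ, Equiv.Perm.coe_mul]
    obtain ⟨D, rfl, hD, E, hE, hacc⟩ := ih h' (map_mem hυΓ) (map_mem hφΓ) hυ' hφ'
    simp only [map_map_pow] at hD hE
    refine ⟨fun | 0 => C₂ | i + 1 => D i, rfl, ?_, E, hE, hacc ∘ hcov.accepting⟩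
    rintro (_ | i) hi
    · simpa using hυ'
    · exact hD i (Nat.lt_of_succ_lt_succ hi)

end AFMA

theorem afma_sufficient_iterated_general {Sigma S : Type}
    (A : AFMA Sigma S) (τ υ φ : List Sigma) (C0 C1 C2 C3 : Set (S × Sigma))
    (hτ : A.Steps C0 τ C1) (hυs : A.Steps C1 υ C2) (hφ : A.Steps C2 φ C3)
    (α : Equiv.Perm Sigma) (hα : IsDeltaPerm A.Δ α) (Γ : Set Sigma)
    (hpre : AFMA.Preceq A.Δ α C2 (⇑α '' Γ) C1 Γ)
    (hsub : ⇑α '' Γ ⊆ Γ)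
    (hletters : ∀ x ∈ υ ++ φ, x ∈ Γ) (k : ℕ) :
    (∃ D : ℕ → Set (S × Sigma), D 0 = C2 ∧
      (∀ i < k, A.Steps (D i) (υ.map ⇑(α ^ (i + 1))) (D (i + 1))) ∧
      ∃ E : Set (S × Sigma), A.Steps (D k) (φ.map ⇑(α ^ k)) E ∧
        (A.Accepting C3 → A.Accepting E)) ∧
    (C0 = {(A.s0, A.θ0)} → A.Accepting C3 →
      pumpedWord α τ υ φ k ∈ A.Lang) := by
  have hcov := AFMA.preceq_image_iff_covers.1 hpre
  obtain ⟨hυΓ, hφΓ⟩ := List.forall_mem_append.1 hletters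
  obtain ⟨D, rfl, hD, E, hE, hacc⟩ :=
    hcov.exists_chain hα (Set.mapsTo_iff_image_subset.2 hsub) hυΓ hφΓ hυs hφ k
  refine ⟨⟨D, rfl, hD, E, hE, hacc⟩, ?_⟩
  rintro rfl hC3
  exact ⟨E, ((hτ.append hυs).append (AFMA.steps_flatMap_range hD)).append hE, hacc hC3⟩

/-- Corollary (iterated sufficient condition): under the hypotheses
`C_{|τυ|}, α(Γ) ⪯_α C_{|τ|}, Γ`, `α(Γ) ⊆ Γ`, `[υφ] ⊆ Γ`, for every `k ≥ 1` there
is a chain `C_{|τυ|} →α(υ) D 1 →α²(υ) ⋯ →α^k(υ) D k →α^k(φ) E` with `E`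
accepting whenever `C_{|τυφ|}` is; in particular, if the run started at the
initial configuration and `C_{|τυφ|}` is accepting, then the pumped word
`τ υ α(υ) ⋯ α^k(υ) α^k(φ)` is accepted. -/
theorem afma_sufficient_iterated {Sigma S : Type} [Infinite Sigma] [Fintype S]
    (A : AFMA Sigma S) (τ υ φ : List Sigma) (hυ : υ ≠ [])
    (C0 C1 C2 C3 : Set (S × Sigma))
    (hf0 : C0.Finite) (hf1 : C1.Finite) (hf2 : C2.Finite) (hf3 : C3.Finite)
    (hτ : A.Steps C0 τ C1) (hυs : A.Steps C1 υ C2) (hφ : A.Steps C2 φ C3)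
    (α : Equiv.Perm Sigma) (hα : IsDeltaPerm A.Δ α) (Γ : Set Sigma)
    (hpre : AFMA.Preceq A.Δ α C2 (⇑α '' Γ) C1 Γ)
    (hsub : ⇑α '' Γ ⊆ Γ)
    (hletters : ∀ x ∈ υ ++ φ, x ∈ Γ) :
    ∀ k : ℕ, 1 ≤ k →
      (∃ D : ℕ → Set (S × Sigma), D 0 = C2 ∧
        (∀ i < k, A.Steps (D i) (υ.map ⇑(α ^ (i + 1))) (D (i + 1))) ∧
        ∃ E : Set (S × Sigma), A.Steps (D k) (φ.map ⇑(α ^ k)) E ∧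
          (A.Accepting C3 → A.Accepting E)) ∧
      (C0 = {(A.s0, A.θ0)} → A.Accepting C3 →
        pumpedWord α τ υ φ k ∈ A.Lang) :=
  fun k _ => afma_sufficient_iterated_general A τ υ φ C0 C1 C2 C3 hτ hυs hφ α hα Γ hpre hsub
    hletters k
end
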